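/- For the two-sided queue Markov chain {z(k)} on ℤ with evolution z(k+1) = z(k) + a^c(z(k),k) - a^s(z(k),k), assume: arrivals are bounded by A_max a.s.; E[a^c(z,k) - a^s(z,k)] = ε(φ^c(z/τ) - φ^s(z/τ)) with |φ^c|, |φ^s| ≤ φ_max; and the negative drift condition holds with constants δ, K > 0. Then the chain is positive recurrent and the steady-state imbalance z̄ satisfies E[|z̄|] ≤ (2A_max² + ετK(2φ_max + δ)) / (εδ). -/

import Mathlib

open MeasureTheory

open ProbabilityTheory Filter Topology Set
open scoped ENNReal NNReal BoundedContinuousFunction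

/-!
Average the laws of the chain over the times `0, …, n`, started from any state. Summing the drift
inequality for `V z = z²` along the trajectory bounds the mean of `|z|` under these averages
uniformly in `n`, so they are tight and have a weak limit point. Pushing an average one step forward
changes it only by its first and last terms, that is by `O(1 / n)`, so by the Feller property the
limit point is invariant; lower semicontinuity carries the moment bound over to it.
-/

section TimeAverage

variable {α : Type*} [MeasurableSpace α] {κ : Kernel α α}

instance isMarkovKernel_pow [IsMarkovKernel κ] (n : ℕ) : IsMarkovKernel (κ ^ n) := by
  induction n with
  | zero => exact inferInstanceAs (IsMarkovKernel Kernel.id)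
  | succ n ih => exact inferInstanceAs (IsMarkovKernel ((κ ^ n) ∘ₖ κ))

theorem comp_kernel_pow_apply (κ : Kernel α α) (n : ℕ) (x : α) :
    κ ∘ₘ (κ ^ n) x = (κ ^ (n + 1)) x := by
  rw [pow_succ']
  exact (Kernel.comp_apply κ (κ ^ n) x).symm

theorem lintegral_kernel_pow_zero (κ : Kernel α α) (x : α) {g : α → ℝ≥0∞} (hg : Measurable g) :
    ∫⁻ y, g y ∂(κ ^ 0) x = g x := by
  rw [pow_zero]
  exact lintegral_dirac' x hg

/-- The average occupation measure of the chain with transition kernel `κ` started at `x`, over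
the times `0, …, n`. Its limit points are the candidates for invariant laws. The horizon is `n + 1`
so that the average is a probability measure for every `n`. -/
noncomputable def timeAverage (κ : Kernel α α) [IsMarkovKernel κ] (x : α) (n : ℕ) :
    ProbabilityMeasure α :=
  ⟨(n + 1 : ℝ≥0∞)⁻¹ • ∑ k ∈ Finset.range (n + 1), (κ ^ k) x, ⟨by
    have hn : (n + 1 : ℝ≥0∞) ≠ ∞ := by finiteness
    simp [ENNReal.inv_mul_cancel _ hn]⟩⟩

theorem lintegral_timeAverage [IsMarkovKernel κ] (x : α) (n : ℕ) (g : α → ℝ≥0∞) :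
    ∫⁻ y, g y ∂(timeAverage κ x n : Measure α) =
      (n + 1 : ℝ≥0∞)⁻¹ * ∑ k ∈ Finset.range (n + 1), ∫⁻ y, g y ∂(κ ^ k) x := by
  simp only [timeAverage, ProbabilityMeasure.coe_mk, lintegral_smul_measure,
    lintegral_finsetSum_measure, smul_eq_mul]

theorem lintegral_comp_timeAverage_add [IsMarkovKernel κ] (x : α) (n : ℕ) {g : α → ℝ≥0∞}
    (hg : Measurable g) :
    ∫⁻ y, g y ∂(κ ∘ₘ (timeAverage κ x n : Measure α)) + (n + 1 : ℝ≥0∞)⁻¹ * g x =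
      ∫⁻ y, g y ∂(timeAverage κ x n : Measure α) +
        (n + 1 : ℝ≥0∞)⁻¹ * ∫⁻ y, g y ∂(κ ^ (n + 1)) x := by
  have hshift (k : ℕ) : ∫⁻ y, ∫⁻ w, g w ∂κ y ∂(κ ^ k) x = ∫⁻ y, g y ∂(κ ^ (k + 1)) x := by
    rw [← comp_kernel_pow_apply, Measure.lintegral_bind κ.aemeasurable hg.aemeasurable]
  rw [Measure.lintegral_bind κ.aemeasurable hg.aemeasurable, lintegral_timeAverage,
    lintegral_timeAverage, ← mul_add, ← mul_add, ← Finset.sum_range_succ,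
    Finset.sum_range_succ' _ (n + 1), lintegral_kernel_pow_zero κ x hg]
  simp only [hshift]

variable {V f : α → ℝ≥0∞} {b : ℝ≥0∞}

theorem lintegral_kernel_pow_add_sum_le [IsMarkovKernel κ] (hV : Measurable V)
    (hf : Measurable f) (hdrift : ∀ x, ∫⁻ y, V y ∂κ x + f x ≤ V x + b) (x : α) (n : ℕ) :
    ∫⁻ y, V y ∂(κ ^ n) x + ∑ k ∈ Finset.range n, ∫⁻ y, f y ∂(κ ^ k) x ≤ V x + n * b := by
  induction n with
  | zero =>
    simp only [lintegral_kernel_pow_zero κ x hV, Finset.range_zero, Finset.sum_empty, add_zero,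
      Nat.cast_zero, zero_mul, le_refl]
  | succ n ih =>
    have hstep : ∫⁻ y, V y ∂(κ ^ (n + 1)) x + ∫⁻ y, f y ∂(κ ^ n) x ≤
        ∫⁻ y, V y ∂(κ ^ n) x + b := calc
      _ = ∫⁻ y, (∫⁻ w, V w ∂κ y + f y) ∂(κ ^ n) x := by
        rw [lintegral_add_right _ hf, ← comp_kernel_pow_apply,
          Measure.lintegral_bind κ.aemeasurable hV.aemeasurable]
      _ ≤ ∫⁻ y, (V y + b) ∂(κ ^ n) x := lintegral_mono hdrift
      _ = ∫⁻ y, V y ∂(κ ^ n) x + b := by simp [lintegral_add_left hV]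
    calc
      _ = (∫⁻ y, V y ∂(κ ^ (n + 1)) x + ∫⁻ y, f y ∂(κ ^ n) x)
          + ∑ k ∈ Finset.range n, ∫⁻ y, f y ∂(κ ^ k) x := by rw [Finset.sum_range_succ]; ring
      _ ≤ (∫⁻ y, V y ∂(κ ^ n) x + b) + ∑ k ∈ Finset.range n, ∫⁻ y, f y ∂(κ ^ k) x := by gcongr
      _ = (∫⁻ y, V y ∂(κ ^ n) x + ∑ k ∈ Finset.range n, ∫⁻ y, f y ∂(κ ^ k) x) + b := by ring
      _ ≤ (V x + n * b) + b := by gcongr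
      _ = V x + (n + 1 : ℕ) * b := by push_cast; ring

theorem lintegral_timeAverage_le [IsMarkovKernel κ] (hV : Measurable V) (hf : Measurable f)
    (hdrift : ∀ x, ∫⁻ y, V y ∂κ x + f x ≤ V x + b) (x : α) (n : ℕ) :
    ∫⁻ y, f y ∂(timeAverage κ x n : Measure α) ≤ (n + 1 : ℝ≥0∞)⁻¹ * V x + b := by
  have hsum : ∑ k ∈ Finset.range (n + 1), ∫⁻ y, f y ∂(κ ^ k) x ≤ V x + (n + 1 : ℝ≥0∞) * b := by
    simpa using le_add_self.trans (lintegral_kernel_pow_add_sum_le hV hf hdrift x (n + 1))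
  calc
    _ ≤ (n + 1 : ℝ≥0∞)⁻¹ * (V x + (n + 1 : ℝ≥0∞) * b) := by
      rw [lintegral_timeAverage]
      gcongr
    _ = (n + 1 : ℝ≥0∞)⁻¹ * V x + b := by
      rw [mul_add, ← mul_assoc, ENNReal.inv_mul_cancel (by simp) (by finiteness), one_mul]

end TimeAverage

section WeakConvergence

theorem tendsto_inv_natCast_add_one_mul {e : ℕ → ℝ≥0∞} {C : ℝ≥0∞} (hC : C ≠ ∞)
    (he : ∀ n, e n ≤ C) : Tendsto (fun n : ℕ ↦ (n + 1 : ℝ≥0∞)⁻¹ * e n) atTop (𝓝 0) := by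
  have hinv : Tendsto (fun n : ℕ ↦ (n + 1 : ℝ≥0∞)⁻¹) atTop (𝓝 0) := by
    simpa using (tendsto_add_atTop_iff_nat 1).2 ENNReal.tendsto_inv_nat_nhds_zero
  have hC_mul : Tendsto (fun n : ℕ ↦ (n + 1 : ℝ≥0∞)⁻¹ * C) atTop (𝓝 0) := by
    simpa only [zero_mul] using ENNReal.Tendsto.mul_const hinv (.inr hC)
  exact tendsto_of_tendsto_of_tendsto_of_le_of_le tendsto_const_nhds hC_mul (fun _ ↦ zero_le)
    fun n ↦ mul_le_mul_right (he n) _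

variable {E : Type*} [TopologicalSpace E] [MeasurableSpace E]

theorem isTightMeasureSet_of_lintegral_le {S : Set (Measure E)} {f : E → ℝ≥0} (hf : Measurable f)
    (hf_top : Tendsto f (cocompact E) atTop) {C : ℝ≥0∞} (hC : C ≠ ∞)
    (hS : ∀ μ ∈ S, ∫⁻ x, f x ∂μ ≤ C) : IsTightMeasureSet S := by
  refine isTightMeasureSet_iff_exists_isCompact_measure_compl_le.2 fun η hη ↦ ?_
  obtain ⟨N, hN⟩ := ENNReal.exists_nat_mul_gt hη.ne' hC
  obtain ⟨K, hK, hKN⟩ := mem_cocompact.1 (hf_top.eventually_ge_atTop (N : ℝ≥0))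
  refine ⟨K, hK, fun μ hμ ↦ ?_⟩
  have hsub : Kᶜ ⊆ {x | (N : ℝ≥0∞) ≤ f x} := fun x hx ↦ by exact_mod_cast hKN hx
  have hN0 : (N : ℝ≥0∞) ≠ 0 := by
    rintro h
    simp [h] at hN
  calc
    μ Kᶜ ≤ (∫⁻ x, f x ∂μ) / N := (measure_mono hsub).trans
      (meas_ge_le_lintegral_div hf.coe_nnreal_ennreal.aemeasurable hN0 (by finiteness))
    _ ≤ C / N := by gcongr; exact hS μ hμ
    _ ≤ η := ENNReal.div_le_of_le_mul' hN.le

variable [OpensMeasurableSpace E]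

theorem continuous_lintegral_of_le {f : E → ℝ≥0} (hf : Continuous f) {c : ℝ≥0}
    (hc : ∀ x, f x ≤ c) : Continuous fun μ : ProbabilityMeasure E ↦ ∫⁻ x, f x ∂(μ : Measure E) :=
  ProbabilityMeasure.continuous_lintegral_boundedContinuousFunction <|
    .mkOfBound ⟨f, hf⟩ c fun x y ↦ by
      rw [NNReal.dist_eq, abs_le]
      have hx : (f x : ℝ) ≤ c := hc x
      have hy : (f y : ℝ) ≤ c := hc y
      constructor <;> simp only [ContinuousMap.coe_mk] <;> linarith [(f x).2, (f y).2]

theorem lowerSemicontinuous_lintegral {f : E → ℝ≥0} (hf : Continuous f) :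
    LowerSemicontinuous fun μ : ProbabilityMeasure E ↦ ∫⁻ x, f x ∂(μ : Measure E) := by
  have htrunc (x : E) : (f x : ℝ≥0∞) = ⨆ n : ℕ, ((min (f x) n : ℝ≥0) : ℝ≥0∞) := by
    refine le_antisymm ?_ (iSup_le fun n ↦ by exact_mod_cast min_le_left _ _)
    obtain ⟨n, hn⟩ := exists_nat_ge (f x)
    exact le_iSup_of_le n (by rw [min_eq_left hn])
  have hmono : Monotone fun (n : ℕ) x ↦ ((min (f x) n : ℝ≥0) : ℝ≥0∞) :=
    fun m n hmn x ↦ by dsimp only; gcongr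
  have hcont (n : ℕ) : Continuous fun x ↦ min (f x) n := hf.min continuous_const
  simp only [htrunc, lintegral_iSup (fun n ↦ (hcont n).measurable.coe_nnreal_ennreal) hmono]
  exact lowerSemicontinuous_iSup fun n ↦
    (continuous_lintegral_of_le (hcont n) fun x ↦ min_le_right _ _).lowerSemicontinuous

end WeakConvergence

section Feller

variable {E : Type*} [TopologicalSpace E] [MeasurableSpace E]

/-- The Feller property of a transition kernel: `x ↦ κ x` is continuous for the topology of weak
convergence. It is tested on nonnegative functions so that no integrability is needed. -/
def IsFeller (κ : Kernel E E) : Prop :=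
  ∀ g : E →ᵇ ℝ≥0, Continuous fun x ↦ ∫⁻ y, g y ∂κ x

theorem isFeller_of_discreteTopology [DiscreteTopology E] (κ : Kernel E E) : IsFeller κ :=
  fun _ ↦ continuous_of_discreteTopology

theorem lintegral_boundedContinuousFunction_le (μ : Measure E) [IsProbabilityMeasure μ]
    (g : E →ᵇ ℝ≥0) : ∫⁻ y, g y ∂μ ≤ nndist g 0 :=
  calc
    ∫⁻ y, g y ∂μ ≤ ∫⁻ _, nndist g 0 ∂μ :=
      lintegral_mono fun y ↦ ENNReal.coe_le_coe.2 <|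
        BoundedContinuousFunction.NNReal.upper_bound g y
    _ = nndist g 0 := by simp

variable {κ : Kernel E E} [IsMarkovKernel κ]

theorem IsFeller.continuous_lintegral_comp [OpensMeasurableSpace E] (hκ : IsFeller κ)
    (g : E →ᵇ ℝ≥0) :
    Continuous fun μ : ProbabilityMeasure E ↦ ∫⁻ y, g y ∂(κ ∘ₘ (μ : Measure E)) := by
  have hle (x : E) : ∫⁻ y, g y ∂κ x ≤ nndist g 0 := lintegral_boundedContinuousFunction_le _ g
  have hfin (x : E) : ∫⁻ y, g y ∂κ x ≠ ∞ := ((hle x).trans_lt ENNReal.coe_lt_top).ne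
  have hcont : Continuous fun x ↦ (∫⁻ y, g y ∂κ x).toNNReal :=
    ENNReal.continuousOn_toNNReal.comp_continuous (hκ g) hfin
  have hg : Measurable fun x ↦ (g x : ℝ≥0∞) := g.continuous.measurable.coe_nnreal_ennreal
  simpa only [Measure.lintegral_bind κ.aemeasurable hg.aemeasurable,
    ENNReal.coe_toNNReal (hfin _)] using
    continuous_lintegral_of_le hcont fun x ↦ ENNReal.toNNReal_mono ENNReal.coe_ne_top (hle x)

variable [HasOuterApproxClosed E] [BorelSpace E]

theorem IsFeller.invariant_of_tendsto_timeAverage (hκ : IsFeller κ) {x : E} {U : Filter ℕ}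
    [U.NeBot] (hU : U ≤ atTop) {π : ProbabilityMeasure E} (hπ : Tendsto (timeAverage κ x) U (𝓝 π)) :
    κ.Invariant (π : Measure E) := by
  refine ext_of_forall_lintegral_eq_of_IsFiniteMeasure fun g ↦ ?_
  have hg : Measurable fun x ↦ (g x : ℝ≥0∞) := g.continuous.measurable.coe_nnreal_ennreal
  have herr {e : ℕ → ℝ≥0∞} (he : ∀ n, e n ≤ nndist g 0) :
      Tendsto (fun n : ℕ ↦ (n + 1 : ℝ≥0∞)⁻¹ * e n) U (𝓝 0) :=
    (tendsto_inv_natCast_add_one_mul ENNReal.coe_ne_top he).mono_left hU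
  have hcomp := (((hκ.continuous_lintegral_comp g).tendsto π).comp hπ).add
    (herr fun _ ↦ ENNReal.coe_le_coe.2 (BoundedContinuousFunction.NNReal.upper_bound g x))
  have hself := (ProbabilityMeasure.tendsto_iff_forall_lintegral_tendsto.1 hπ g).add
    (herr fun n ↦ lintegral_boundedContinuousFunction_le ((κ ^ (n + 1)) x) g)
  rw [add_zero] at hcomp hself
  exact tendsto_nhds_unique (hcomp.congr fun n ↦ lintegral_comp_timeAverage_add x n hg) hself

variable [T2Space E]

theorem IsFeller.exists_invariant_lintegral_le (hκ : IsFeller κ) {V : E → ℝ≥0∞} {f : E → ℝ≥0}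
    {b : ℝ≥0∞} (hV : Measurable V) (hf : Continuous f) (hf_top : Tendsto f (cocompact E) atTop)
    (hb : b ≠ ∞) (hdrift : ∀ x, ∫⁻ y, V y ∂κ x + f x ≤ V x + b) {x : E} (hx : V x ≠ ∞) :
    ∃ π : Measure E, IsProbabilityMeasure π ∧ κ.Invariant π ∧ ∫⁻ y, f y ∂π ≤ b := by
  have hle (n : ℕ) := lintegral_timeAverage_le hV hf.measurable.coe_nnreal_ennreal hdrift x n
  have htight : IsTightMeasureSet {(μ : Measure E) | μ ∈ range (timeAverage κ x)} := by
    refine isTightMeasureSet_of_lintegral_le hf.measurable hf_top (C := V x + b)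
      (by finiteness) ?_
    rintro _ ⟨_, ⟨n, rfl⟩, rfl⟩
    refine (hle n).trans ?_
    gcongr
    exact mul_le_of_le_one_left' (by simp)
  obtain ⟨π, -, hπ⟩ := (isCompact_closure_of_isTightMeasureSet htight).exists_mapClusterPt
    (f := atTop) (u := timeAverage κ x)
    (tendsto_principal.2 (.of_forall fun n ↦ subset_closure (mem_range_self n)))
  obtain ⟨U, hU, hπ⟩ := mapClusterPt_iff_ultrafilter.1 hπ
  refine ⟨π, inferInstance, hκ.invariant_of_tendsto_timeAverage hU hπ, ?_⟩
  have hbound : Tendsto (fun n : ℕ ↦ (n + 1 : ℝ≥0∞)⁻¹ * V x + b) U (𝓝 b) := by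
    simpa using ((tendsto_inv_natCast_add_one_mul hx fun _ ↦ le_rfl).mono_left hU).add_const b
  refine le_of_forall_lt_imp_le_of_dense fun c hc ↦ ge_of_tendsto hbound ?_
  filter_upwards [hπ.eventually (lowerSemicontinuous_lintegral hf π c hc)] with n hn
  exact hn.le.trans (hle n)

theorem IsFeller.exists_invariant_integral_le [Nonempty E] (hκ : IsFeller κ) {V f : E → ℝ} {b : ℝ}
    (hV : Measurable V) (hV_nonneg : 0 ≤ V) (hV_int : ∀ x, Integrable V (κ x))
    (hf : Continuous f) (hf_nonneg : 0 ≤ f) (hf_top : Tendsto f (cocompact E) atTop) (hb : 0 ≤ b)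
    (hdrift : ∀ x, ∫ y, V y ∂κ x + f x ≤ V x + b) :
    ∃ π : Measure E, IsProbabilityMeasure π ∧ κ.Invariant π ∧ Integrable f π ∧
      ∫ y, f y ∂π ≤ b := by
  have hdrift' (x : E) : ∫⁻ y, .ofReal (V y) ∂κ x + (f x).toNNReal ≤
      ENNReal.ofReal (V x) + .ofReal b := by
    rw [← ofReal_integral_eq_lintegral_ofReal (hV_int x) (.of_forall hV_nonneg),
      ← ENNReal.ofReal, ← ENNReal.ofReal_add (integral_nonneg hV_nonneg) (hf_nonneg x),
      ← ENNReal.ofReal_add (hV_nonneg x) hb]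
    exact ENNReal.ofReal_le_ofReal (hdrift x)
  obtain ⟨x⟩ := ‹Nonempty E›
  obtain ⟨π, hprob, hinv, hle⟩ := hκ.exists_invariant_lintegral_le hV.ennreal_ofReal
    (continuous_real_toNNReal.comp hf) (tendsto_real_toNNReal_atTop.comp hf_top)
    ENNReal.ofReal_ne_top hdrift' (x := x) ENNReal.ofReal_ne_top
  have hint : Integrable f π :=
    (lintegral_ofReal_ne_top_iff_integrable hf.aestronglyMeasurable (.of_forall hf_nonneg)).1
      (hle.trans_lt ENNReal.ofReal_lt_top).ne
  refine ⟨π, hprob, hinv, hint, ?_⟩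
  rw [← ENNReal.ofReal_le_ofReal_iff hb,
    ofReal_integral_eq_lintegral_ofReal hint (.of_forall hf_nonneg)]
  exact hle

end Feller

section Drift

theorem integral_add_sq {Ω : Type*} [MeasurableSpace Ω] {μ : Measure Ω} [IsProbabilityMeasure μ]
    {X : Ω → ℝ} (hX : MemLp X 2 μ) (x : ℝ) :
    ∫ ω, (x + X ω) ^ 2 ∂μ = x ^ 2 + 2 * x * ∫ ω, X ω ∂μ + ∫ ω, X ω ^ 2 ∂μ := by
  have hX1 : Integrable X μ := hX.integrable one_le_two
  simp only [add_sq]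
  have hlin : Integrable (fun ω ↦ x ^ 2 + 2 * x * X ω) μ :=
    (integrable_const _).add (hX1.const_mul _)
  rw [integral_add hlin hX.integrable_sq, integral_add (integrable_const _) (hX1.const_mul _),
    integral_const_mul]
  simp

theorem integral_sq_le_sq_of_ae_abs_le {Ω : Type*} [MeasurableSpace Ω] {μ : Measure Ω}
    [IsProbabilityMeasure μ] {X : Ω → ℝ} {c : ℝ} (hX : ∀ᵐ ω ∂μ, |X ω| ≤ c) :
    ∫ ω, X ω ^ 2 ∂μ ≤ c ^ 2 := by
  have hsq : ∀ᵐ ω ∂μ, ‖X ω ^ 2‖ ≤ c ^ 2 := by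
    filter_upwards [hX] with ω hω
    rw [Real.norm_eq_abs, abs_pow]
    gcongr
  simpa using (Real.le_norm_self _).trans (norm_integral_le_of_norm_le_const hsq)

theorem mul_add_mul_abs_le_of_drift {x D B δ M : ℝ} (hM : 0 ≤ M) (hδ : 0 ≤ δ) (hD : |D| ≤ B)
    (hpos : M < x → D ≤ -δ) (hneg : x < -M → δ ≤ D) : x * D + δ * |x| ≤ M * (B + δ) := by
  have hB : 0 ≤ B := (abs_nonneg D).trans hD
  rcases le_or_gt |x| M with hx | hx
  · calc
      x * D + δ * |x| ≤ |x| * |D| + δ * |x| := by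
        rw [← abs_mul]
        gcongr
        exact le_abs_self _
      _ ≤ M * B + δ * M := by gcongr
      _ = M * (B + δ) := by ring
  · have hdrift : x * D + δ * |x| ≤ 0 := by
      rcases lt_abs.1 hx with hx | hx
      · rw [abs_of_pos (hM.trans_lt hx)]
        nlinarith [hpos hx]
      · have hx' : x < -M := by linarith
        rw [abs_of_neg (by linarith)]
        nlinarith [hneg hx']
    exact hdrift.trans (by positivity)

end Drift

section Queue

/-- The transition kernel of the imbalance `z ↦ z + a^c - a^s` of a two-sided queue, where `ν z` is
the joint law of the customer and server arrivals `(a^c, a^s)` in state `z`. -/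
noncomputable def imbalanceKernel (ν : ℤ → Measure (ℤ × ℤ)) : Kernel ℤ ℤ :=
  .ofFunOfCountable fun z ↦ (ν z).map fun p ↦ z + p.1 - p.2

variable {ν : ℤ → Measure (ℤ × ℤ)}

instance isMarkovKernel_imbalanceKernel [∀ z, IsProbabilityMeasure (ν z)] :
    IsMarkovKernel (imbalanceKernel ν) :=
  ⟨fun _ ↦ Measure.isProbabilityMeasure_map (measurable_of_countable _).aemeasurable⟩

theorem integrable_sq_imbalanceKernel {z : ℤ} [IsFiniteMeasure (ν z)]
    (hL2 : MemLp (fun p : ℤ × ℤ ↦ (p.1 : ℝ) - p.2) 2 (ν z)) :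
    Integrable (fun w : ℤ ↦ (w : ℝ) ^ 2) (imbalanceKernel ν z) := by
  refine (integrable_map_measure (measurable_of_countable _).aestronglyMeasurable
    (measurable_of_countable _).aemeasurable).2 ?_
  simpa [Function.comp_def, add_sub_assoc] using ((memLp_const (z : ℝ)).add hL2).integrable_sq

theorem integral_sq_imbalanceKernel {z : ℤ} [IsProbabilityMeasure (ν z)]
    (hL2 : MemLp (fun p : ℤ × ℤ ↦ (p.1 : ℝ) - p.2) 2 (ν z)) :
    ∫ w : ℤ, (w : ℝ) ^ 2 ∂imbalanceKernel ν z = (z : ℝ) ^ 2 +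
      2 * z * ∫ p, ((p.1 : ℝ) - p.2) ∂ν z + ∫ p, ((p.1 : ℝ) - p.2) ^ 2 ∂ν z := by
  rw [← integral_add_sq hL2 z]
  refine (integral_map (measurable_of_countable _).aemeasurable
    (measurable_of_countable _).aestronglyMeasurable).trans ?_
  simp [add_sub_assoc]

theorem integral_sq_imbalanceKernel_add_mul_abs_le {z : ℤ} [IsProbabilityMeasure (ν z)]
    {m ε D B δ M : ℝ} (hL2 : MemLp (fun p : ℤ × ℤ ↦ (p.1 : ℝ) - p.2) 2 (ν z))
    (hm : ∫ p, ((p.1 : ℝ) - p.2) ^ 2 ∂ν z ≤ m) (hmean : ∫ p, ((p.1 : ℝ) - p.2) ∂ν z = ε * D)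
    (hε : 0 ≤ ε) (hM : 0 ≤ M) (hδ : 0 ≤ δ) (hD : |D| ≤ B)
    (hpos : M < z → D ≤ -δ) (hneg : z < -M → δ ≤ D) :
    ∫ w : ℤ, (w : ℝ) ^ 2 ∂imbalanceKernel ν z + 2 * ε * δ * |(z : ℝ)| ≤
      (z : ℝ) ^ 2 + (m + 2 * ε * (M * (B + δ))) := by
  have hscalar : z * D + δ * |(z : ℝ)| ≤ M * (B + δ) :=
    mul_add_mul_abs_le_of_drift hM hδ hD hpos hneg
  rw [integral_sq_imbalanceKernel hL2, hmean]
  linarith [mul_le_mul_of_nonneg_left hscalar (by positivity : 0 ≤ 2 * ε)]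

end Queue

theorem stmt13_general (ν : ℤ → Measure (ℤ × ℤ)) (hν : ∀ z, IsProbabilityMeasure (ν z))
    (m ε τ φmax δ K : ℝ) (φc φs : ℝ → ℝ)
    (hε : 0 < ε) (hτ : 0 < τ) (hδ : 0 < δ)
    (hL2 : ∀ z, MemLp (fun p : ℤ × ℤ ↦ (p.1 : ℝ) - p.2) 2 (ν z))
    (hm : ∀ z, ∫ p, ((p.1 : ℝ) - p.2) ^ 2 ∂(ν z) ≤ m)
    (hmean : ∀ z : ℤ, ∫ p, ((p.1 : ℝ) - (p.2 : ℝ)) ∂(ν z)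
      = ε * (φc ((z : ℝ) / τ) - φs ((z : ℝ) / τ)))
    (hφc : ∀ x, |φc x| ≤ φmax) (hφs : ∀ x, |φs x| ≤ φmax)
    (hd1 : ∀ x > K, φc x - φs x < -δ) (hd2 : ∀ x < -K, δ < φc x - φs x) :
    ∃ π : Measure ℤ, IsProbabilityMeasure π ∧
      π.bind (fun z => (ν z).map (fun p => z + p.1 - p.2)) = π ∧
      Integrable (fun z : ℤ ↦ |(z : ℝ)|) π ∧
      ∫ z, |(z : ℝ)| ∂π ≤ (m / 2 + ε * τ * K * (2 * φmax + δ)) / (ε * δ) := by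
  have hK : 0 ≤ K := by
    by_contra! hK
    linarith [hd1 0 hK, hd2 0 (neg_pos.2 hK)]
  have hφmax : 0 ≤ φmax := (abs_nonneg _).trans (hφc 0)
  have hm_nonneg : 0 ≤ m := (integral_nonneg fun p ↦ sq_nonneg _).trans (hm 0)
  have hdrift (z : ℤ) : ∫ w : ℤ, (w : ℝ) ^ 2 ∂imbalanceKernel ν z + 2 * ε * δ * |(z : ℝ)| ≤
      (z : ℝ) ^ 2 + (m + 2 * ε * (K * τ * (2 * φmax + δ))) := by
    have hD : |φc (z / τ) - φs (z / τ)| ≤ 2 * φmax :=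
      (abs_sub _ _).trans (by linarith [hφc (z / τ), hφs (z / τ)])
    exact integral_sq_imbalanceKernel_add_mul_abs_le (hL2 z) (hm z) (hmean z) hε.le
      (by positivity) hδ.le hD (fun hz ↦ (hd1 _ ((lt_div_iff₀ hτ).2 hz)).le)
      (fun hz ↦ (hd2 _ ((div_lt_iff₀ hτ).2 (by linarith))).le)
  obtain ⟨π, hprob, hinv, hint, hle⟩ :=
    (isFeller_of_discreteTopology (imbalanceKernel ν)).exists_invariant_integral_le
      (measurable_of_countable _) (fun z ↦ sq_nonneg _)
      (fun z ↦ integrable_sq_imbalanceKernel (hL2 z)) continuous_of_discreteTopology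
      (fun z ↦ by positivity)
      ((tendsto_norm_cocompact_atTop (E := ℤ)).const_mul_atTop (by positivity : 0 < 2 * ε * δ))
      (by positivity) hdrift
  have hint_abs : Integrable (fun z : ℤ ↦ |(z : ℝ)|) π :=
    (integrable_const_mul_iff (by positivity : 2 * ε * δ ≠ 0).isUnit _).1 hint
  refine ⟨π, hprob, hinv, hint_abs, ?_⟩
  have hbound : 2 * ε * δ * ∫ z : ℤ, |(z : ℝ)| ∂π ≤ m + 2 * ε * (K * τ * (2 * φmax + δ)) :=
    (integral_const_mul _ _).symm.trans_le hle
  rw [le_div_iff₀ (mul_pos hε hδ)]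
  linarith

/-- Positive recurrence of the two-sided queue under the negative drift condition:
there exists a stationary probability distribution π for the imbalance chain
z ↦ z + a^c - a^s, and it satisfies the moment bound
E[|z̄|] ≤ (2A_max² + ετK(2φ_max + δ))/(εδ). -/
theorem stmt13 (ν : ℤ → Measure (ℤ × ℤ)) (hν : ∀ z, IsProbabilityMeasure (ν z))
    (Amax ε τ φmax δ K : ℝ) (φc φs : ℝ → ℝ)
    (hε : 0 < ε) (hτ : 0 < τ) (hδ : 0 < δ) (hK : 0 < K) (hA : 0 < Amax)
    -- arrivals bounded by A_max almost surely
    (hb : ∀ z, ∀ᵐ p ∂(ν z), |(p.1 : ℝ)| ≤ Amax ∧ |(p.2 : ℝ)| ≤ Amax)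
    -- mean drift: E[a^c - a^s | state z] = ε(φ^c(z/τ) - φ^s(z/τ))
    (hmean : ∀ z : ℤ, ∫ p, ((p.1 : ℝ) - (p.2 : ℝ)) ∂(ν z)
      = ε * (φc ((z : ℝ) / τ) - φs ((z : ℝ) / τ)))
    (hφc : ∀ x, |φc x| ≤ φmax) (hφs : ∀ x, |φs x| ≤ φmax)
    -- negative drift condition
    (hd1 : ∀ x > K, φc x - φs x < -δ) (hd2 : ∀ x < -K, δ < φc x - φs x) :
    ∃ π : Measure ℤ, IsProbabilityMeasure π ∧
      π.bind (fun z => (ν z).map (fun p => z + p.1 - p.2)) = π ∧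
      ∫ z, |(z : ℝ)| ∂π ≤ (2 * Amax ^ 2 + ε * τ * K * (2 * φmax + δ)) / (ε * δ) := by
  have hab (z : ℤ) : ∀ᵐ p ∂(ν z), |(p.1 : ℝ) - p.2| ≤ 2 * Amax := by
    filter_upwards [hb z] with p hp
    exact (abs_sub _ _).trans (by linarith [hp.1, hp.2])
  obtain ⟨π, hprob, hinv, -, hle⟩ := stmt13_general ν hν ((2 * Amax) ^ 2) ε τ φmax δ K φc φs
    hε hτ hδ (fun z ↦ .of_bound (measurable_of_countable _).aestronglyMeasurable _ (hab z))
    (fun z ↦ integral_sq_le_sq_of_ae_abs_le (hab z)) hmean hφc hφs hd1 hd2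
  exact ⟨π, hprob, hinv, hle.trans_eq (by ring)⟩
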